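/- arXiv:2011.12876 — 4 statements merged into one kernel-verified Lean document; each statement's English description precedes it below -/
import Mathlib

section
/- For every real number k ≠ 0 and every point v ∈ ℝ³, the Hessian determinant H_k of F_k satisfies H_k(v) = -54k²·F_{k'}(v), where k' = (4 - k³)/(3k²). In particular F_k(0, 0, 1) = -1 and H_k(0, 0, 1) = 54k² > 0. -/
noncomputable section

/-- The cubic form `F k (x,y,z) = -x^3 - y^3 - (z-x-y)^3 + 3k x y (z-x-y)`. -/
def F (k x y z : ℝ) : ℝ := -x^3 - y^3 - (z - x - y)^3 + 3*k*x*y*(z - x - y)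

/-- Partial derivative with respect to the first variable. -/
def pdx (f : ℝ → ℝ → ℝ → ℝ) (x y z : ℝ) : ℝ := deriv (fun t => f t y z) x

/-- Partial derivative with respect to the second variable. -/
def pdy (f : ℝ → ℝ → ℝ → ℝ) (x y z : ℝ) : ℝ := deriv (fun t => f x t z) y

/-- Partial derivative with respect to the third variable. -/
def pdz (f : ℝ → ℝ → ℝ → ℝ) (x y z : ℝ) : ℝ := deriv (fun t => f x y t) z

/-- The Hessian determinant of a function of three real variables: the determinant of
the 3×3 matrix of its second partial derivatives. -/
def hessDet (f : ℝ → ℝ → ℝ → ℝ) (x y z : ℝ) : ℝ :=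
  !![pdx (pdx f) x y z, pdy (pdx f) x y z, pdz (pdx f) x y z;
     pdx (pdy f) x y z, pdy (pdy f) x y z, pdz (pdy f) x y z;
     pdx (pdz f) x y z, pdy (pdz f) x y z, pdz (pdz f) x y z].det

/-- The gradient of a function of three real variables. -/
def grad (f : ℝ → ℝ → ℝ → ℝ) (x y z : ℝ) : ℝ × ℝ × ℝ :=
  (pdx f x y z, pdy f x y z, pdz f x y z)

/-- The dot product on `ℝ × ℝ × ℝ`. -/
def dot (a b : ℝ × ℝ × ℝ) : ℝ := a.1 * b.1 + a.2.1 * b.2.1 + a.2.2 * b.2.2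

/-!
In the coordinates `a = x`, `b = y`, `c = z - x - y` the form `F k` is the Hesse cubic
`-a³ - b³ - c³ + 3kabc`. The second derivative is a bilinear form, so a linear change of variables
`A` multiplies the Hessian determinant by `(det A)²`; the shear above has determinant `1`, and the
claim reduces to Hesse's classical identity: the Hessian of a member of the pencil spanned by
`a³ + b³ + c³` and `abc` is again in the pencil.
-/

section HessianMatrix

open Matrix

variable {𝕜 E G m n : Type*} [NontriviallyNormedField 𝕜]
  [NormedAddCommGroup G] [NormedSpace 𝕜 G]

theorem lineDeriv_comp_linearMap {E' : Type*} [AddCommGroup E] [Module 𝕜 E] [AddCommGroup E']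
    [Module 𝕜 E'] (f : E' → G) (L : E →ₗ[𝕜] E') (v u : E) :
    lineDeriv 𝕜 (fun w => f (L w)) v u = lineDeriv 𝕜 f (L v) (L u) := by
  simp only [lineDeriv, map_add, map_smul]

theorem lineDeriv_lineDeriv_eq_fderiv_fderiv [NormedAddCommGroup E] [NormedSpace 𝕜 E]
    {f : E → G} {v : E} (hf : ContDiffAt 𝕜 2 f v) (u u' : E) :
    lineDeriv 𝕜 (fun w => lineDeriv 𝕜 f w u) v u' = fderiv 𝕜 (fderiv 𝕜 f) v u' u := by
  have hfderiv : DifferentiableAt 𝕜 (fderiv 𝕜 f) v :=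
    (hf.fderiv_right (m := 1) (by norm_num)).differentiableAt one_ne_zero
  have hline : (fun w => lineDeriv 𝕜 f w u) =ᶠ[nhds v] fun w => fderiv 𝕜 f w u :=
    (hf.eventually (by simp)).mono fun w hw =>
      (hw.differentiableAt two_ne_zero).lineDeriv_eq_fderiv
  rw [hline.lineDeriv_eq, (hfderiv.clm_apply (by fun_prop)).lineDeriv_eq_fderiv,
    fderiv_clm_apply hfderiv (by fun_prop)]
  simp

/-- The Hessian matrix of a function of finitely many variables: row `i` is the gradient of the
`i`-th partial derivative. It is built from line derivatives, so that its entries are iterated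
one-variable derivatives even where `f` is not differentiable. -/
def hessianMatrix [DecidableEq n] (f : (n → 𝕜) → 𝕜) (v : n → 𝕜) : Matrix n n 𝕜 :=
  of fun i j => lineDeriv 𝕜 (fun w => lineDeriv 𝕜 f w (Pi.single i 1)) v (Pi.single j 1)

variable [Fintype m] [DecidableEq m] [Fintype n] [DecidableEq n]

theorem hessianMatrix_comp_mulVec {f : (m → 𝕜) → 𝕜} (A : Matrix m n 𝕜) {v : n → 𝕜}
    (hf : ContDiffAt 𝕜 2 f (A *ᵥ v)) :
    hessianMatrix (fun w => f (A *ᵥ w)) v = Aᵀ * hessianMatrix f (A *ᵥ v) * A := by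
  let B := (fderiv 𝕜 (fderiv 𝕜 f) (A *ᵥ v)).flip.toLinearMap₁₂
  have hB : hessianMatrix f (A *ᵥ v) = LinearMap.toMatrix₂' 𝕜 B := by
    ext i j
    simp [hessianMatrix, B, lineDeriv_lineDeriv_eq_fderiv_fderiv hf]
  have hBA : hessianMatrix (fun w => f (A *ᵥ w)) v =
      LinearMap.toMatrix₂' 𝕜 (B.compl₁₂ A.toLin' A.toLin') := by
    ext i j
    simp only [hessianMatrix, of_apply, ← toLin'_apply, lineDeriv_comp_linearMap]
    rw [lineDeriv_comp_linearMap (fun w => lineDeriv 𝕜 f w _),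
      toLin'_apply A v, lineDeriv_lineDeriv_eq_fderiv_fderiv hf]
    simp [B]
  rw [hBA, hB, LinearMap.toMatrix₂'_compl₁₂, LinearMap.toMatrix'_toLin']

theorem det_hessianMatrix_comp_mulVec {f : (n → 𝕜) → 𝕜} (A : Matrix n n 𝕜) {v : n → 𝕜}
    (hf : ContDiffAt 𝕜 2 f (A *ᵥ v)) :
    (hessianMatrix (fun w => f (A *ᵥ w)) v).det = A.det ^ 2 * (hessianMatrix f (A *ᵥ v)).det := by
  rw [hessianMatrix_comp_mulVec A hf, det_mul, det_mul, det_transpose]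
  ring

end HessianMatrix

section ThreeVariables

open Matrix

/-- A function of three real variables as a function on `Fin 3 → ℝ`, so that `hessianMatrix`
applies to it. -/
def onVec (f : ℝ → ℝ → ℝ → ℝ) (v : Fin 3 → ℝ) : ℝ := f (v 0) (v 1) (v 2)

variable (f : ℝ → ℝ → ℝ → ℝ)

theorem onVec_vecCons (x y z : ℝ) : onVec f ![x, y, z] = f x y z := rfl

theorem lineDeriv_onVec_zero (v : Fin 3 → ℝ) :
    lineDeriv ℝ (onVec f) v (Pi.single 0 1) = onVec (pdx f) v := by
  simpa [lineDeriv, onVec, pdx] using deriv_comp_const_add (fun t => f t (v 1) (v 2)) (v 0) 0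

theorem lineDeriv_onVec_one (v : Fin 3 → ℝ) :
    lineDeriv ℝ (onVec f) v (Pi.single 1 1) = onVec (pdy f) v := by
  simpa [lineDeriv, onVec, pdy] using deriv_comp_const_add (fun t => f (v 0) t (v 2)) (v 1) 0

theorem lineDeriv_onVec_two (v : Fin 3 → ℝ) :
    lineDeriv ℝ (onVec f) v (Pi.single 2 1) = onVec (pdz f) v := by
  simpa [lineDeriv, onVec, pdz] using deriv_comp_const_add (fun t => f (v 0) (v 1) t) (v 2) 0

theorem hessDet_eq_det_hessianMatrix (x y z : ℝ) :
    hessDet f x y z = (hessianMatrix (onVec f) ![x, y, z]).det := by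
  unfold hessDet
  congr 1
  ext i j
  fin_cases i <;> fin_cases j <;>
    simp [hessianMatrix, lineDeriv_onVec_zero, lineDeriv_onVec_one, lineDeriv_onVec_two,
      onVec_vecCons]

variable {f}

theorem hessDet_shear (a b x y z : ℝ)
    (hf : ContDiffAt ℝ 2 (onVec f) ![x, y, z - a * x - b * y]) :
    hessDet (fun x y z => f x y (z - a * x - b * y)) x y z =
      hessDet f x y (z - a * x - b * y) := by
  let A : Matrix (Fin 3) (Fin 3) ℝ := !![1, 0, 0; 0, 1, 0; -a, -b, 1]
  have hA (v : Fin 3 → ℝ) : A *ᵥ v = ![v 0, v 1, v 2 - a * v 0 - b * v 1] := by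
    ext i
    fin_cases i <;> simp [A, mulVec, dotProduct, Fin.sum_univ_three]
    ring
  have hdet : A.det = 1 := by simp [A, det_fin_three]
  have hcomp : onVec (fun x y z => f x y (z - a * x - b * y)) = fun v => onVec f (A *ᵥ v) := by
    ext v
    simp [hA, onVec]
  have hv : A *ᵥ ![x, y, z] = ![x, y, z - a * x - b * y] := hA _
  rw [hessDet_eq_det_hessianMatrix, hcomp, det_hessianMatrix_comp_mulVec A (hv ▸ hf), hdet, hv,
    hessDet_eq_det_hessianMatrix, one_pow, one_mul]

end ThreeVariables

section HesseCubic

/-- The member of the Hesse pencil of plane cubics with parameter `k`, with the sign that makes it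
the form `F k` in the coordinates `(x, y, z - x - y)`. -/
def hesseCubic (k a b c : ℝ) : ℝ := -a ^ 3 - b ^ 3 - c ^ 3 + 3 * k * a * b * c

theorem contDiff_onVec_hesseCubic (k : ℝ) {n : WithTop ℕ∞} :
    ContDiff ℝ n (onVec (hesseCubic k)) := by
  unfold onVec hesseCubic
  fun_prop

theorem pdx_hesseCubic (k : ℝ) :
    pdx (hesseCubic k) = fun a b c => -3 * a ^ 2 + 3 * k * b * c := by
  ext a b c
  simp (disch := fun_prop) [pdx, hesseCubic]

theorem pdy_hesseCubic (k : ℝ) :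
    pdy (hesseCubic k) = fun a b c => -3 * b ^ 2 + 3 * k * a * c := by
  ext a b c
  simp (disch := fun_prop) [pdy, hesseCubic]

theorem pdz_hesseCubic (k : ℝ) :
    pdz (hesseCubic k) = fun a b c => -3 * c ^ 2 + 3 * k * a * b := by
  ext a b c
  simp (disch := fun_prop) [pdz, hesseCubic]

theorem hessDet_hesseCubic_eq_det (k a b c : ℝ) :
    hessDet (hesseCubic k) a b c =
      !![-6 * a, 3 * k * c, 3 * k * b;
         3 * k * c, -6 * b, 3 * k * a;
         3 * k * b, 3 * k * a, -6 * c].det := by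
  unfold hessDet
  rw [pdx_hesseCubic, pdy_hesseCubic, pdz_hesseCubic]
  congr 1
  ext i j
  fin_cases i <;> fin_cases j <;> simp (disch := fun_prop) [pdx, pdy, pdz] <;> ring

theorem hessDet_hesseCubic (k a b c : ℝ) :
    hessDet (hesseCubic k) a b c =
      54 * k ^ 2 * (a ^ 3 + b ^ 3 + c ^ 3) + (54 * k ^ 3 - 216) * (a * b * c) := by
  rw [hessDet_hesseCubic_eq_det, Matrix.det_fin_three]
  simp only [Matrix.of_apply, Matrix.cons_val]
  ring

theorem hessDet_hesseCubic_eq_mul_hesseCubic {k : ℝ} (hk : k ≠ 0) (a b c : ℝ) :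
    hessDet (hesseCubic k) a b c =
      -54 * k ^ 2 * hesseCubic ((4 - k ^ 3) / (3 * k ^ 2)) a b c := by
  rw [hessDet_hesseCubic, hesseCubic]
  field_simp
  ring

end HesseCubic

theorem F_eq_hesseCubic (k x y z : ℝ) : F k x y z = hesseCubic k x y (z - x - y) := rfl

theorem F_zero_zero_one (k : ℝ) : F k 0 0 1 = -1 := by
  norm_num [F]

theorem hessDet_F (k x y z : ℝ) :
    hessDet (F k) x y z = hessDet (hesseCubic k) x y (z - x - y) := by
  have hF : F k = fun x y z => hesseCubic k x y (z - 1 * x - 1 * y) := by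
    ext x y z
    rw [F_eq_hesseCubic, one_mul, one_mul]
  rw [hF, hessDet_shear 1 1 x y z (contDiff_onVec_hesseCubic k).contDiffAt, one_mul, one_mul]

theorem stmt_3 (k : ℝ) (hk : k ≠ 0) :
    (∀ x y z : ℝ, hessDet (F k) x y z = -54*k^2 * F ((4 - k^3)/(3*k^2)) x y z) ∧
    F k 0 0 1 = -1 ∧ hessDet (F k) 0 0 1 = 54*k^2 ∧ 54*k^2 > 0 := by
  have hess (x y z : ℝ) : hessDet (F k) x y z = -54*k^2 * F ((4 - k^3)/(3*k^2)) x y z := by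
    rw [hessDet_F, hessDet_hesseCubic_eq_mul_hesseCubic hk, F_eq_hesseCubic]
  refine ⟨hess, F_zero_zero_one k, ?_, by positivity⟩
  rw [hess, F_zero_zero_one]
  ring
end
end

section
/- For every real number k, the polar quadric of F_k with respect to the point (0, 0, 1) is given by (1/3)·∇F_k(x, y, z)·(0, 0, 1) = k·x·y - (z - x - y)² for all (x, y, z). Moreover, for k ≠ 0 this quadratic form on ℝ³ is nondegenerate of signature (1, 2), i.e. it is equivalent over ℝ to the form u² - v² - w². -/
noncomputable section

/-!
The third partial derivative of `F k` is `3 (k x y - (z - x - y)²)`. The product `k x y` is a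
hyperbolic plane whatever the sign of `k ≠ 0`, so it becomes `u² - v²` in suitable coordinates on
the `(x, y)`-plane; the remaining square is that of `w = z - x - y`, which a shear along the
`z`-axis makes a coordinate independent of `(u, v)`.
-/

section DiagonalCoordinates

variable {K : Type*} [Field K] [NeZero (2 : K)] {k : K}

/-- Linear coordinates `(u, v) = ((k x + y) / 2, (k x - y) / 2)` on the hyperbolic plane `k x y`
which diagonalize it to `u² - v²`. They come from the factors `k x = u + v` and `y = u - v`. -/
def hyperbolicCoordinates (hk : k ≠ 0) : (K × K) ≃ₗ[K] K × K where
  toFun p := ((k * p.1 + p.2) / 2, (k * p.1 - p.2) / 2)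
  invFun q := ((q.1 + q.2) / k, q.1 - q.2)
  map_add' p q := by ext <;> simp only [Prod.fst_add, Prod.snd_add] <;> ring
  map_smul' c p := by
    ext <;> simp only [Prod.smul_fst, Prod.smul_snd, smul_eq_mul, RingHom.id_apply] <;> ring
  left_inv p := by ext <;> field_simp <;> ring
  right_inv q := by ext <;> field_simp <;> ring

theorem hyperbolicCoordinates_fst_sq_sub_snd_sq (hk : k ≠ 0) (p : K × K) :
    (hyperbolicCoordinates hk p).1 ^ 2 - (hyperbolicCoordinates hk p).2 ^ 2 = k * p.1 * p.2 := by
  change ((k * p.1 + p.2) / 2) ^ 2 - ((k * p.1 - p.2) / 2) ^ 2 = k * p.1 * p.2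
  field_simp
  ring

theorem exists_linearEquiv_mul_sub_sq_eq (hk : k ≠ 0) (f : K × K →ₗ[K] K) :
    ∃ L : (K × K × K) ≃ₗ[K] K × K × K, ∀ x y z : K,
      k * x * y - (z - f (x, y)) ^ 2
        = (L (x, y, z)).1 ^ 2 - (L (x, y, z)).2.1 ^ 2 - (L (x, y, z)).2.2 ^ 2 := by
  let assoc := LinearEquiv.prodAssoc K K K K
  let shear := (hyperbolicCoordinates hk).skewProd (LinearEquiv.refl K K) (-f)
  refine ⟨assoc.symm ≪≫ₗ shear ≪≫ₗ assoc, fun x y z => ?_⟩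
  change _ = (hyperbolicCoordinates hk (x, y)).1 ^ 2 - (hyperbolicCoordinates hk (x, y)).2 ^ 2
    - (z + -f (x, y)) ^ 2
  rw [hyperbolicCoordinates_fst_sq_sub_snd_sq, ← sub_eq_add_neg]

end DiagonalCoordinates

theorem dot_grad_zero_zero_one (f : ℝ → ℝ → ℝ → ℝ) (x y z : ℝ) :
    dot (grad f x y z) (0, 0, 1) = pdz f x y z := by
  simp [dot, grad]

theorem hasDerivAt_F_third (k x y z : ℝ) :
    HasDerivAt (F k x y) (3 * (k * x * y - (z - x - y) ^ 2)) z := by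
  have hw : HasDerivAt (fun t : ℝ => t - x - y) 1 z :=
    ((hasDerivAt_id z).sub_const x).sub_const y
  have hF := ((hw.pow 3).const_sub (-x ^ 3 - y ^ 3)).add (hw.const_mul (3 * k * x * y))
  refine hF.congr_deriv ?_
  norm_num
  ring

theorem pdz_F (k x y z : ℝ) : pdz (F k) x y z = 3 * (k * x * y - (z - x - y) ^ 2) :=
  (hasDerivAt_F_third k x y z).deriv

theorem stmt_10 (k : ℝ) :
    (∀ x y z : ℝ, (1/3) * dot (grad (F k) x y z) (0, 0, 1) = k*x*y - (z - x - y)^2) ∧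
    (k ≠ 0 → ∃ L : (ℝ × ℝ × ℝ) ≃ₗ[ℝ] (ℝ × ℝ × ℝ),
      ∀ v : ℝ × ℝ × ℝ, (1/3) * dot (grad (F k) v.1 v.2.1 v.2.2) (0, 0, 1)
        = (L v).1^2 - (L v).2.1^2 - (L v).2.2^2) := by
  have polar_eq (x y z : ℝ) :
      (1/3) * dot (grad (F k) x y z) (0, 0, 1) = k*x*y - (z - x - y)^2 := by
    rw [dot_grad_zero_zero_one, pdz_F]
    ring
  refine ⟨polar_eq, fun hk => ?_⟩
  obtain ⟨L, hL⟩ :=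
    exists_linearEquiv_mul_sub_sq_eq hk (LinearMap.fst ℝ ℝ ℝ + LinearMap.snd ℝ ℝ ℝ)
  refine ⟨L, fun ⟨x, y, z⟩ => ?_⟩
  rw [polar_eq, ← hL, LinearMap.add_apply, LinearMap.fst_apply, LinearMap.snd_apply, sub_sub]
end
end

section
/- Let W ⊆ ℝⁿ be a convex cone with nonempty interior, let D₀ be a nonzero point of the frontier of W, and let f : ℝⁿ → ℝ be a nonzero linear functional with f(D₀) = 0 and f(w) ≤ 0 for all w ∈ W. Assume D₀ is a smooth boundary point in the sense that every linear functional g with g(D₀) = 0 and g ≤ 0 on W is a nonnegative scalar multiple of f. Then for any point A ∈ ℝⁿ, the closed line segment joining A and D₀ is disjoint from the interior of W if and only if f(A) ≥ 0. -/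
noncomputable section

/-!
Separate the interior of a convex set from a segment that misses it. If the endpoint `x` of the
segment lies in the closure of the set, the separating functional is maximal on the set and minimal
on the segment at `x`. Smoothness of `x` makes it a positive multiple of `f`, so `f` too is minimal
on the segment at `x`. Conversely, since a nonzero functional is an open map, `f` is strictly below
`f x` on the interior. For a cone, scaling `x` shows that `f x = 0`.
-/

section SupportingFunctional

open Set

variable {E : Type*} [AddCommGroup E] [Module ℝ E] {s t : Set E} {x : E}

theorem isMinOn_segment_right_iff {f : E → ℝ} {a : E} (hf : ConcaveOn ℝ (segment ℝ a x) f) :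
    IsMinOn f (segment ℝ a x) x ↔ f x ≤ f a := by
  have ha : a ∈ segment ℝ a x := left_mem_segment ℝ a x
  exact ⟨fun hmin => hmin ha, fun hle _ hy =>
    (le_min hle le_rfl).trans (hf.ge_on_segment ha (right_mem_segment ℝ a x) hy)⟩

variable [TopologicalSpace E]

theorem isMaxOn_iff_of_forall_pos_smul_mem [ContinuousConstSMul ℝ E] {f : StrongDual ℝ E}
    (hs : ∀ c : ℝ, 0 < c → ∀ y ∈ s, c • y ∈ s) (hx : x ∈ closure s) :
    IsMaxOn f s x ↔ f x = 0 ∧ ∀ y ∈ s, f y ≤ 0 := by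
  refine ⟨fun hmax => ?_, fun ⟨hfx, hfs⟩ y hy => (hfs y hy).trans_eq hfx.symm⟩
  have smul_le : ∀ c : ℝ, 0 < c → c * f x ≤ f x := fun c hc => by
    have hcx : c • x ∈ closure s := map_mem_closure (continuous_const_smul c) hx (hs c hc)
    calc c * f x = f (c • x) := (map_smul f c x).symm
      _ ≤ f x := hmax.closure f.continuous.continuousOn hcx
  have hfx : f x = 0 := by linarith [smul_le 2 two_pos, smul_le (1 / 2) one_half_pos]
  exact ⟨hfx, fun y hy => (hmax hy).trans_eq hfx⟩

variable [IsTopologicalAddGroup E] [ContinuousSMul ℝ E]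

theorem map_lt_of_mem_interior_of_forall_le {f : StrongDual ℝ E} (hf : f ≠ 0) {u : ℝ}
    (hu : ∀ y ∈ s, f y ≤ u) (hx : x ∈ interior s) : f x < u := by
  have image_subset : f '' interior s ⊆ interior (Iic u) :=
    ((f.isOpenMap_of_ne_zero hf).image_interior_subset s).trans
      (interior_mono (image_subset_iff.mpr hu))
  rw [interior_Iic] at image_subset
  exact image_subset (mem_image_of_mem f hx)

theorem disjoint_interior_of_isMaxOn_of_isMinOn {f : StrongDual ℝ E} (hf : f ≠ 0)
    (hmax : IsMaxOn f s x) (hmin : IsMinOn f t x) : Disjoint (interior s) t :=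
  disjoint_left.mpr fun _ hys hyt =>
    (map_lt_of_mem_interior_of_forall_le hf (isMaxOn_iff.mp hmax) hys).not_ge (hmin hyt)

theorem exists_isMaxOn_isMinOn_of_disjoint_interior (hs : Convex ℝ s)
    (hsint : (interior s).Nonempty) (ht : Convex ℝ t) (hst : Disjoint (interior s) t)
    (hxs : x ∈ closure s) (hxt : x ∈ t) :
    ∃ g : StrongDual ℝ E, g ≠ 0 ∧ IsMaxOn g s x ∧ IsMinOn g t x := by
  obtain ⟨g, u, hg, hgs, hgt⟩ :=
    geometric_hahn_banach_of_nonempty_interior hs ht hst hsint ⟨x, hxt⟩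
  have map_x : g x = u :=
    le_antisymm (closure_minimal hgs (isClosed_Iic.preimage g.continuous) hxs) (hgt x hxt)
  exact ⟨g, hg, fun y hy => (hgs y hy).trans_eq map_x.symm, fun y hy => map_x.trans_le (hgt y hy)⟩

theorem stmt_15_general (hs : Convex ℝ s) (hsint : (interior s).Nonempty) (hx : x ∈ closure s)
    {f : StrongDual ℝ E} (hf : f ≠ 0) (hmax : IsMaxOn f s x)
    (hsmooth : ∀ g : StrongDual ℝ E, IsMaxOn g s x → ∃ c : ℝ, 0 ≤ c ∧ g = c • f) (a : E) :
    segment ℝ a x ∩ interior s = ∅ ↔ f x ≤ f a := by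
  have hconcave : ConcaveOn ℝ (segment ℝ a x) f := f.toLinearMap.concaveOn (convex_segment a x)
  rw [inter_comm, ← disjoint_iff_inter_eq_empty, ← isMinOn_segment_right_iff hconcave]
  refine ⟨fun hdisj => ?_, disjoint_interior_of_isMaxOn_of_isMinOn hf hmax⟩
  obtain ⟨g, hg, hgmax, hgmin⟩ := exists_isMaxOn_isMinOn_of_disjoint_interior hs hsint
    (convex_segment a x) hdisj hx (right_mem_segment ℝ a x)
  obtain ⟨c, hc, rfl⟩ := hsmooth g hgmax
  have hc_pos : 0 < c := hc.lt_of_ne' (left_ne_zero_of_smul hg)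
  exact fun y hy => le_of_mul_le_mul_left (hgmin hy) hc_pos

end SupportingFunctional

theorem stmt_15 {n : ℕ} (W : Set (Fin n → ℝ))
    (hWconv : Convex ℝ W)
    (hWcone : ∀ c : ℝ, 0 < c → ∀ w ∈ W, c • w ∈ W)
    (hWint : (interior W).Nonempty)
    (D₀ : Fin n → ℝ) (hD₀ : D₀ ∈ frontier W) (hD₀ne : D₀ ≠ 0)
    (f : (Fin n → ℝ) →ₗ[ℝ] ℝ) (hfne : f ≠ 0)
    (hfD₀ : f D₀ = 0) (hfW : ∀ w ∈ W, f w ≤ 0)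
    (hsmooth : ∀ g : (Fin n → ℝ) →ₗ[ℝ] ℝ, g D₀ = 0 → (∀ w ∈ W, g w ≤ 0) →
      ∃ c : ℝ, 0 ≤ c ∧ g = c • f) :
    ∀ A : Fin n → ℝ, segment ℝ A D₀ ∩ interior W = ∅ ↔ 0 ≤ f A := by
  have isMaxOn_W_iff (g : StrongDual ℝ (Fin n → ℝ)) :
      IsMaxOn g W D₀ ↔ g D₀ = 0 ∧ ∀ w ∈ W, g w ≤ 0 :=
    isMaxOn_iff_of_forall_pos_smul_mem hWcone (frontier_subset_closure hD₀)
  simpa [hfD₀] using stmt_15_general hWconv hWint (frontier_subset_closure hD₀)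
    (f := f.toContinuousLinearMap) (by simpa using hfne)
    ((isMaxOn_W_iff _).mpr ⟨hfD₀, hfW⟩) fun g hg => by
      obtain ⟨hgD₀, hgW⟩ := (isMaxOn_W_iff g).mp hg
      obtain ⟨c, hc, hgf⟩ := hsmooth g hgD₀ hgW
      exact ⟨c, hc, ContinuousLinearMap.coe_injective hgf⟩
end
end

section
/- Let V be a finite-dimensional real vector space, T : V × V × V → ℝ a symmetric trilinear form, and C ⊆ V a convex cone (closed under addition and positive scalar multiplication) which is pointed, i.e. C ∩ (-C) ⊆ {0}. Assume that for every nonzero D ∈ C the bilinear form (X, Y) ↦ T(D, X, Y) is nondegenerate. Then the map D ↦ T(D, D, ·) is injective on C: if D₁, D₂ ∈ C satisfy T(D₁, D₁, X) = T(D₂, D₂, X) for all X ∈ V, then D₁ = D₂. -/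
noncomputable section

theorem eq_zero_and_eq_zero_of_add_eq_zero_of_inter_neg_subset {V : Type*} [AddGroup V]
    {C : Set V} (hC : C ∩ (-C) ⊆ {0}) {x y : V} (hx : x ∈ C) (hy : y ∈ C) (hxy : x + y = 0) :
    x = 0 ∧ y = 0 := by
  have hneg : -x = y := neg_eq_of_add_eq_zero_right hxy
  have hx₀ : x = 0 := hC ⟨hx, Set.mem_neg.mpr (hneg ▸ hy)⟩
  exact ⟨hx₀, by rw [← hneg, hx₀, neg_zero]⟩

section Bilinear

variable {R V W : Type*} [CommSemiring R] [AddCommMonoid W] [Module R W]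

theorem bilin_add_apply_left_eq_add_apply_right [AddCommMonoid V] [Module R V]
    {B : V →ₗ[R] V →ₗ[R] W} {x y : V} (hxy : B x y = B y x) (hsq : B x x = B y y) :
    B (x + y) x = B (x + y) y :=
  calc
    B (x + y) x = B x x + B y x := LinearMap.map_add₂ B x y x
    _ = B y y + B x y := by rw [hsq, hxy]
    _ = B x y + B y y := add_comm _ _
    _ = B (x + y) y := (LinearMap.map_add₂ B x y y).symm

theorem stmt_16_general [AddCommGroup V] [Module R V] (B : V →ₗ[R] V →ₗ[R] W)
    (hsymm : ∀ x y : V, B x y = B y x) (C : Set V)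
    (hCadd : ∀ x ∈ C, ∀ y ∈ C, x + y ∈ C) (hCpointed : C ∩ (-C) ⊆ {0})
    (hinj : ∀ D ∈ C, D ≠ 0 → Function.Injective (B D)) :
    Set.InjOn (fun D ↦ B D D) C := by
  intro D₁ h₁ D₂ h₂ hsq
  by_cases hsum : D₁ + D₂ = 0
  · obtain ⟨rfl, rfl⟩ :=
      eq_zero_and_eq_zero_of_add_eq_zero_of_inter_neg_subset hCpointed h₁ h₂ hsum
    rfl
  · exact hinj (D₁ + D₂) (hCadd D₁ h₁ D₂ h₂) hsum
      (bilin_add_apply_left_eq_add_apply_right (hsymm D₁ D₂) hsq)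

end Bilinear

theorem stmt_16 {V : Type*} [AddCommGroup V] [Module ℝ V] [FiniteDimensional ℝ V]
    (T : V →ₗ[ℝ] V →ₗ[ℝ] V →ₗ[ℝ] ℝ)
    (hsymm₁ : ∀ x y z : V, T x y z = T y x z)
    (hsymm₂ : ∀ x y z : V, T x y z = T x z y)
    (C : Set V)
    (hCadd : ∀ x ∈ C, ∀ y ∈ C, x + y ∈ C)
    (hCsmul : ∀ c : ℝ, 0 < c → ∀ x ∈ C, c • x ∈ C)
    (hCpointed : C ∩ (-C) ⊆ {0})
    (hnd : ∀ D ∈ C, D ≠ 0 → ∀ X : V, (∀ Y : V, T D X Y = 0) → X = 0) :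
    ∀ D₁ ∈ C, ∀ D₂ ∈ C, (∀ X : V, T D₁ D₁ X = T D₂ D₂ X) → D₁ = D₂ := by
  have hinj : ∀ D ∈ C, D ≠ 0 → Function.Injective (T D) := fun D hD hD₀ ↦
    (injective_iff_map_eq_zero (T D)).mpr fun X hX ↦ hnd D hD hD₀ X (LinearMap.congr_fun hX)
  exact fun D₁ h₁ D₂ h₂ h ↦ stmt_16_general T (fun x y ↦ LinearMap.ext (hsymm₁ x y)) C hCadd
    hCpointed hinj h₁ h₂ (LinearMap.ext h)
end
end
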